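/- Efficiency lower bound for two-wise independent functions (Corollary 1 of the paper, in measurement form): In the setting of the full measurement-adversary theorem for a two-wise independent f : 𝒳 × 𝒴 → 𝒵 with |𝒳| = |𝒴| — i.e., τ = (1/√(|𝒳||𝒴|)) ∑_{x,y} e_x ⊗ e_x ⊗ e_y ⊗ e_y ⊗ φ, contractions K_A : ℂ^𝒳 ⊗ ℂ^{S_N} → ℂ^{T_A}, K_B : ℂ^𝒴 ⊗ ℂ^{S_M} → ℂ^{T_B} with K_A†K_A ≤ I, K_B†K_B ≤ I, Ψ = (I ⊗ I ⊗ K_A ⊗ K_B)τ, p = ‖Ψ‖² > 0 (the non-abort probability), and W^{x,y}(t,t') = (1/p)∑_a Ψ(x,y,a,t)·conj(Ψ(x,y,a,t')) — suppose Bob, conditioned on non-abort, guesses the value f(X,Y) by a POVM: a family (G_z)_{z∈𝒵} of positive semidefinite matrices on ℂ^𝒴 ⊗ ℂ^{T_B} with ∑_z G_z = I, whose success probability P = ∑_{x,y} Tr(G_{f(x,y)} · (E_{yy} ⊗' W^{x,y})) satisfies P ≥ 1 − γ, where E_{yy} ⊗' W^{x,y} denotes the matrix on ℂ^𝒴 ⊗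 ℂ^{T_B} supported on the y-block and equal to W^{x,y} there. If γ < 1 − 1/|𝒵|, then p ≤ (|𝒵|/|𝒳|) · (1 − γ − 1/|𝒵|)^{−2}; equivalently, log₂(1/p) ≥ log₂|𝒳| − log₂|𝒵| + 2·log₂(1 − γ − 1/|𝒵|). -/

import Mathlib

open scoped BigOperators ComplexOrder
open Matrix Finset

/-- Löwner order: `A ≤ B` iff `B - A` is positive semidefinite. -/
def Loewner {n : Type*} [Fintype n] (A B : Matrix n n ℂ) : Prop := (B - A).PosSemidef

/-!
If Alice does not abort on input `x`, she leaves Bob's share of `φ` in an unnormalized state `ω x`;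
since `K_A` is a contraction, `ω x ≤ ρ` for the reduced state `ρ` of `φ`, which has trace one.
Bob's operations on input `y` amount to effects `0 ≤ M y z ≤ 1` on that share. His advantage over
blind guessing is `∑ tr (M y z * D y z)` with `D y z = ∑ x, ([f x y = z] - 1/|𝒵|) • ω x`, and
two-wise independence says that the rows of the coefficient matrix are orthogonal of squared norm
`c = |𝒴| (1 - 1/|𝒵|)`.

Put `T = (∑ x, ω x)^(1/2)` and apply Cauchy–Schwarz to the pairing `∑ tr (M * D)` with weight `T` on
the effects and `T⁻¹` on the deviations. As `M ≤ 1`, the effects contribute at most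
`∑ tr (M * T ^ 2)`, which is `|𝒳| |𝒴|` times the non-abort probability. By orthogonality the
deviations contribute `c * ∑ x, tr (ω x * T⁻¹ * ω x * T⁻¹)`, which is at most `c` because
`ω x ≤ ρ` for one factor and `T⁻¹ * (∑ x, ω x) * T⁻¹ = 1` for the sum of the others.
-/

section ReTrace

open scoped MatrixOrder

/-- The real part of the trace, as an `ℝ`-linear functional. On products of Hermitian matrices it
is the real Hilbert–Schmidt pairing, in which all measurement probabilities are expressed. -/
noncomputable def reTrace (n : Type*) [Fintype n] : Matrix n n ℂ →ₗ[ℝ] ℝ :=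
  Complex.reLm ∘ₗ traceLinearMap n ℝ ℂ

variable {m n : Type*} [Fintype m] [Fintype n]

lemma reTrace_apply (A : Matrix n n ℂ) : reTrace n A = A.trace.re := rfl

lemma reTrace_mul_comm (A : Matrix m n ℂ) (B : Matrix n m ℂ) :
    reTrace m (A * B) = reTrace n (B * A) := by
  rw [reTrace_apply, reTrace_apply, trace_mul_comm]

lemma reTrace_mul_conjTranspose (A : Matrix m n ℂ) :
    reTrace m (A * Aᴴ) = ∑ i, ∑ j, ‖A i j‖ ^ 2 := by
  simp only [reTrace_apply, trace, diag_apply, mul_apply, conjTranspose_apply, Complex.re_sum,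
    Complex.star_def, Complex.mul_conj, Complex.normSq_eq_norm_sq, Complex.ofReal_re]

lemma reTrace_nonneg {A : Matrix n n ℂ} (hA : 0 ≤ A) : 0 ≤ reTrace n A :=
  (Complex.le_def.1 (nonneg_iff_posSemidef.1 hA).trace_nonneg).1

lemma reTrace_mul_nonneg {A B : Matrix n n ℂ} (hA : 0 ≤ A) (hB : 0 ≤ B) :
    0 ≤ reTrace n (A * B) := by
  classical
  rw [← CFC.sqrt_mul_sqrt_self A hA, mul_assoc, reTrace_mul_comm]
  exact reTrace_nonneg (conjugate_nonneg_of_nonneg hB (CFC.sqrt_nonneg A))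

lemma reTrace_mul_le_mul_left {A B C : Matrix n n ℂ} (hA : 0 ≤ A) (hBC : B ≤ C) :
    reTrace n (A * B) ≤ reTrace n (A * C) := by
  have := reTrace_mul_nonneg hA (sub_nonneg.2 hBC)
  rwa [mul_sub, map_sub, sub_nonneg] at this

lemma reTrace_mul_mul_mul_nonneg {A T : Matrix n n ℂ} (hA : A.IsHermitian) (hT : 0 ≤ T) :
    0 ≤ reTrace n (A * T * A * T) :=
  reTrace_mul_nonneg (IsSelfAdjoint.conjugate_nonneg hT hA) hT

-- Cauchy–Schwarz for the semi-inner product `(A, B) ↦ tr (A T B T)` on Hermitian matrices.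
lemma sq_reTrace_mul_mul_mul_le {A B T : Matrix n n ℂ} (hA : A.IsHermitian) (hB : B.IsHermitian)
    (hT : 0 ≤ T) :
    reTrace n (A * T * B * T) ^ 2 ≤
      reTrace n (A * T * A * T) * reTrace n (B * T * B * T) := by
  have symm : reTrace n (B * T * A * T) = reTrace n (A * T * B * T) := by
    rw [mul_assoc (B * T), reTrace_mul_comm, mul_assoc (A * T)]
  have quadratic_nonneg (t : ℝ) : 0 ≤ reTrace n (B * T * B * T) * (t * t) +
      2 * reTrace n (A * T * B * T) * t + reTrace n (A * T * A * T) := by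
    have := reTrace_mul_mul_mul_nonneg (hA.add (hB.smul (IsSelfAdjoint.all t))) hT
    simp only [add_mul, mul_add, Matrix.smul_mul, Matrix.mul_smul, map_add, map_smul, smul_eq_mul,
      symm] at this
    linarith
  have := discrim_le_zero quadratic_nonneg
  rw [discrim] at this
  linarith

variable [DecidableEq n]

lemma sq_reTrace_mul_le {A B T : Matrix n n ℂ} (hA : A.IsHermitian) (hB : B.IsHermitian)
    (hT : T.PosDef) :
    reTrace n (A * B) ^ 2 ≤ reTrace n (A * T * A * T) * reTrace n (B * T⁻¹ * B * T⁻¹) := by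
  have hdet : IsUnit T.det := (isUnit_iff_isUnit_det T).1 hT.isUnit
  have hB' : (T⁻¹ * B * T⁻¹).IsHermitian := by
    simpa only [hT.inv.isHermitian.eq] using
      isHermitian_mul_mul_conjTranspose T⁻¹ hB
  have cross : A * T * (T⁻¹ * B * T⁻¹) * T = A * B := by
    simp only [mul_assoc, nonsing_inv_mul T hdet, mul_one, mul_nonsing_inv_cancel_left T _ hdet]
  have square : T⁻¹ * B * T⁻¹ * T * (T⁻¹ * B * T⁻¹) * T = T⁻¹ * (B * T⁻¹ * B) := by
    simp only [mul_assoc, nonsing_inv_mul T hdet, mul_one]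
  simpa only [cross, square, reTrace_mul_comm T⁻¹] using
    sq_reTrace_mul_mul_mul_le hA hB' (nonneg_iff_posSemidef.2 hT.posSemidef)

lemma reTrace_effect_mul_le {E T : Matrix n n ℂ} (hE : 0 ≤ E) (hE1 : E ≤ 1) (hT : 0 ≤ T) :
    reTrace n (E * T * E * T) ≤ reTrace n (E * (T * T)) := by
  have h := reTrace_mul_le_mul_left (conjugate_nonneg_of_nonneg hE hT) hE1
  rwa [mul_one, mul_assoc T, mul_assoc T, reTrace_mul_comm T, reTrace_mul_comm T,
    mul_assoc E T T] at h

end ReTrace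

section MeasurementAdversary

open scoped MatrixOrder

variable {n ι κ : Type*} [Fintype n] [Fintype ι] [Fintype κ]
  {ω : ι → Matrix n n ℂ} {ρ T : Matrix n n ℂ} {M : κ → Matrix n n ℂ} {H : Matrix ι κ ℝ} {c : ℝ}

lemma sum_reTrace_orthogonal_combination [DecidableEq ι] (hH : H * Hᵀ = c • 1)
    (A B : Matrix n n ℂ) :
    ∑ k, reTrace n ((∑ i, H i k • ω i) * A * (∑ i, H i k • ω i) * B) =
      c * ∑ i, reTrace n (ω i * A * ω i * B) := by
  have row_orthogonal (i j : ι) : ∑ k, H i k * H j k = if i = j then c else 0 := by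
    simpa [mul_apply, one_apply] using congr_fun₂ hH i j
  calc ∑ k, reTrace n ((∑ i, H i k • ω i) * A * (∑ i, H i k • ω i) * B)
      = ∑ k, ∑ i, ∑ j, H i k * (H j k * reTrace n (ω j * A * ω i * B)) := by
        simp only [Finset.mul_sum, Finset.sum_mul, map_sum, Matrix.mul_smul, Matrix.smul_mul,
          map_smul, smul_eq_mul]
    _ = ∑ i, ∑ j, (∑ k, H i k * H j k) * reTrace n (ω j * A * ω i * B) := by
        rw [sum_comm]
        refine sum_congr rfl fun i _ ↦ ?_
        rw [sum_comm]
        simp only [sum_mul, mul_assoc]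
    _ = c * ∑ i, reTrace n (ω i * A * ω i * B) := by
        simp [row_orthogonal, mul_sum]

variable [DecidableEq n]

lemma sum_reTrace_whitened_le (hω : ∀ i, 0 ≤ ω i) (hωρ : ∀ i, ω i ≤ ρ) (hρ : 0 ≤ ρ)
    (hT : T.PosDef) (hωT : ∑ i, ω i ≤ T * T) :
    ∑ i, reTrace n (ω i * T⁻¹ * ω i * T⁻¹) ≤ reTrace n ρ := by
  have hdet : IsUnit T.det := (isUnit_iff_isUnit_det T).1 hT.isUnit
  have hTinv : 0 ≤ T⁻¹ := nonneg_iff_posSemidef.2 hT.inv.posSemidef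
  have hnormalized : T⁻¹ * (∑ i, ω i) * T⁻¹ ≤ 1 := by
    simpa only [mul_assoc, mul_nonsing_inv T hdet, nonsing_inv_mul T hdet, mul_one] using
      conjugate_le_conjugate_of_nonneg hωT hTinv
  calc ∑ i, reTrace n (ω i * T⁻¹ * ω i * T⁻¹)
      = ∑ i, reTrace n (T⁻¹ * ω i * T⁻¹ * ω i) := by
        refine sum_congr rfl fun i _ ↦ ?_
        rw [reTrace_mul_comm _ T⁻¹]
        simp only [mul_assoc]
    _ ≤ ∑ i, reTrace n (T⁻¹ * ω i * T⁻¹ * ρ) :=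
        sum_le_sum fun i _ ↦
          reTrace_mul_le_mul_left (conjugate_nonneg_of_nonneg (hω i) hTinv) (hωρ i)
    _ = reTrace n (ρ * (T⁻¹ * (∑ i, ω i) * T⁻¹)) := by
        rw [reTrace_mul_comm ρ, ← map_sum, mul_sum, sum_mul, sum_mul]
    _ ≤ reTrace n ρ := by
        simpa only [mul_one] using reTrace_mul_le_mul_left hρ hnormalized

lemma sq_sum_reTrace_le_of_sum_le_mul_self [DecidableEq ι] (hω : ∀ i, 0 ≤ ω i)
    (hωρ : ∀ i, ω i ≤ ρ) (hρ : 0 ≤ ρ) (hM : ∀ k, 0 ≤ M k) (hM1 : ∀ k, M k ≤ 1)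
    (hc : 0 ≤ c) (hH : H * Hᵀ = c • 1) (hT : T.PosDef) (hωT : ∑ i, ω i ≤ T * T) :
    (∑ k, reTrace n (M k * ∑ i, H i k • ω i)) ^ 2 ≤
      (∑ k, reTrace n (M k * (T * T))) * (c * reTrace n ρ) := by
  have hT0 : 0 ≤ T := nonneg_iff_posSemidef.2 hT.posSemidef
  have hTinv : 0 ≤ T⁻¹ := nonneg_iff_posSemidef.2 hT.inv.posSemidef
  have hMherm (k : κ) : (M k).IsHermitian := (nonneg_iff_posSemidef.1 (hM k)).isHermitian
  have hDherm (k : κ) : (∑ i, H i k • ω i).IsHermitian :=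
    isSelfAdjoint_sum _ fun i _ ↦ (IsSelfAdjoint.all (H i k)).smul (.of_nonneg (hω i))
  calc (∑ k, reTrace n (M k * ∑ i, H i k • ω i)) ^ 2
      ≤ (∑ k, reTrace n (M k * T * M k * T)) *
          ∑ k, reTrace n ((∑ i, H i k • ω i) * T⁻¹ * (∑ i, H i k • ω i) * T⁻¹) :=
        sum_sq_le_sum_mul_sum_of_sq_le_mul univ
          (fun k _ ↦ reTrace_mul_mul_mul_nonneg (hMherm k) hT0)
          (fun k _ ↦ reTrace_mul_mul_mul_nonneg (hDherm k) hTinv)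
          (fun k _ ↦ sq_reTrace_mul_le (hMherm k) (hDherm k) hT)
    _ ≤ (∑ k, reTrace n (M k * (T * T))) * (c * reTrace n ρ) := by
        rw [sum_reTrace_orthogonal_combination hH]
        gcongr with k
        · exact mul_nonneg hc (sum_nonneg fun i _ ↦
            reTrace_mul_mul_mul_nonneg (nonneg_iff_posSemidef.1 (hω i)).isHermitian hTinv)
        · exact sum_nonneg fun k _ ↦
            reTrace_mul_nonneg (hM k) (IsSelfAdjoint.of_nonneg hT0).mul_self_nonneg
        · exact reTrace_effect_mul_le (hM k) (hM1 k) hT0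
        · exact sum_reTrace_whitened_le hω hωρ hρ hT hωT

-- `∑ i, ω i` may be singular, so it is perturbed by `ε • 1` before taking its inverse square root.
theorem sq_sum_reTrace_orthogonal_le [DecidableEq ι] (hω : ∀ i, 0 ≤ ω i) (hωρ : ∀ i, ω i ≤ ρ)
    (hρ : 0 ≤ ρ) (hM : ∀ k, 0 ≤ M k) (hM1 : ∀ k, M k ≤ 1) (hc : 0 ≤ c) (hH : H * Hᵀ = c • 1) :
    (∑ k, reTrace n (M k * ∑ i, H i k • ω i)) ^ 2 ≤
      (∑ k, reTrace n (M k * ∑ i, ω i)) * (c * reTrace n ρ) := by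
  have perturbed (ε : ℝ) (hε : 0 < ε) : (∑ k, reTrace n (M k * ∑ i, H i k • ω i)) ^ 2 ≤
      (∑ k, reTrace n (M k * ∑ i, ω i) + ε * ∑ k, reTrace n (M k)) * (c * reTrace n ρ) := by
    set σ : Matrix n n ℂ := ∑ i, ω i + ε • 1 with hσ
    have hσpos : σ.PosDef := PosDef.posSemidef_add
      (nonneg_iff_posSemidef.1 (sum_nonneg fun i _ ↦ hω i)) (PosDef.one.smul hε)
    have hsqrt : CFC.sqrt σ * CFC.sqrt σ = σ :=
      CFC.sqrt_mul_sqrt_self σ (nonneg_iff_posSemidef.2 hσpos.posSemidef)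
    have hωσ : ∑ i, ω i ≤ CFC.sqrt σ * CFC.sqrt σ := by
      rw [hsqrt, hσ]
      exact le_add_of_nonneg_right (nonneg_iff_posSemidef.2 (PosSemidef.one.smul hε.le))
    have h := sq_sum_reTrace_le_of_sum_le_mul_self hω hωρ hρ hM hM1 hc hH
      hσpos.isStrictlyPositive.sqrt.posDef hωσ
    rw [hsqrt] at h
    simpa only [hσ, mul_add, Matrix.mul_smul, mul_one, map_add, map_smul, smul_eq_mul,
      sum_add_distrib, ← mul_sum] using h
  have limit : Filter.Tendsto (fun ε : ℝ ↦
      (∑ k, reTrace n (M k * ∑ i, ω i) + ε * ∑ k, reTrace n (M k)) * (c * reTrace n ρ))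
      (nhdsWithin 0 (Set.Ioi 0)) (nhds ((∑ k, reTrace n (M k * ∑ i, ω i)) * (c * reTrace n ρ))) :=
    (Continuous.tendsto' (by fun_prop) _ _ (by simp)).mono_left nhdsWithin_le_nhds
  exact ge_of_tendsto limit (Filter.eventually_of_mem self_mem_nhdsWithin perturbed)

end MeasurementAdversary

section TwoWiseIndependence

open scoped MatrixOrder

variable {X Y Z n : Type*} [Fintype Y] [Fintype Z] [DecidableEq Z] {f : X → Y → Z}

/-- Two-wise independence of `f`, for uniformly distributed `y`; the collision count is multiplied
by `|Z|` so that it is an identity of natural numbers. -/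
def IsTwoWiseIndependent (f : X → Y → Z) : Prop :=
  ∀ x₁ x₂ : X, x₁ ≠ x₂ →
    (univ.filter fun y => f x₁ y = f x₂ y).card * Fintype.card Z = Fintype.card Y

/-- The deviation of the graph of `f` from a uniformly random guess: the entry at `(x, (y, z))` is
`[f x y = z] - 1/|Z|`. -/
noncomputable def guessBias (f : X → Y → Z) : Matrix X (Y × Z) ℝ :=
  of fun x j ↦ (if f x j.1 = j.2 then 1 else 0) - (Fintype.card Z : ℝ)⁻¹

lemma sum_indicator_sub_inv_card_mul [Nonempty Z] (a b : Z) :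
    ∑ z, ((if a = z then (1 : ℝ) else 0) - (Fintype.card Z : ℝ)⁻¹) *
        ((if b = z then 1 else 0) - (Fintype.card Z : ℝ)⁻¹) =
      (if a = b then 1 else 0) - (Fintype.card Z : ℝ)⁻¹ := by
  simp [sub_mul, mul_sub, eq_comm (a := b)]

lemma guessBias_mul_transpose [DecidableEq X] [Nonempty Z] (hf : IsTwoWiseIndependent f) :
    guessBias f * (guessBias f)ᵀ =
      ((Fintype.card Y : ℝ) * (1 - (Fintype.card Z : ℝ)⁻¹)) • 1 := by
  ext x x'
  have entry : (guessBias f * (guessBias f)ᵀ) x x' =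
      (#{y | f x y = f x' y} : ℝ) - Fintype.card Y * (Fintype.card Z : ℝ)⁻¹ := by
    simp [guessBias, mul_apply, Fintype.sum_prod_type, sum_indicator_sub_inv_card_mul]
  rw [entry, Matrix.smul_apply, one_apply, smul_eq_mul]
  split_ifs with hx
  · simp [hx, mul_sub]
  · have collisions : (#{y | f x y = f x' y} : ℝ) * Fintype.card Z = Fintype.card Y :=
      mod_cast hf x x' hx
    rw [← collisions, mul_inv_cancel_right₀ (mod_cast Fintype.card_ne_zero), sub_self, mul_zero]

variable [Fintype X] [Fintype n] {ω : X → Matrix n n ℂ} {ρ : Matrix n n ℂ}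
  {M : Y → Z → Matrix n n ℂ}

lemma sum_reTrace_guessBias (f : X → Y → Z) (M : Y → Z → Matrix n n ℂ) (ω : X → Matrix n n ℂ) :
    ∑ j : Y × Z, reTrace n (M j.1 j.2 * ∑ x, guessBias f x j • ω x) =
      ∑ x, ∑ y, reTrace n (M y (f x y) * ω x) -
        (Fintype.card Z : ℝ)⁻¹ * ∑ x, ∑ y, ∑ z, reTrace n (M y z * ω x) := by
  calc ∑ j : Y × Z, reTrace n (M j.1 j.2 * ∑ x, guessBias f x j • ω x)
      = ∑ x, ∑ y, ∑ z, guessBias f x (y, z) * reTrace n (M y z * ω x) := by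
        simp only [Finset.mul_sum, map_sum, Matrix.mul_smul, map_smul, smul_eq_mul]
        rw [sum_comm]
        simp only [Fintype.sum_prod_type]
    _ = _ := by
        simp [guessBias, sub_mul, mul_sum]

theorem sq_guessing_advantage_le [DecidableEq n] [Nonempty Z] (hf : IsTwoWiseIndependent f)
    (hω : ∀ x, 0 ≤ ω x) (hωρ : ∀ x, ω x ≤ ρ) (hρ : 0 ≤ ρ)
    (hM : ∀ y z, 0 ≤ M y z) (hM1 : ∀ y z, M y z ≤ 1) :
    (∑ x, ∑ y, reTrace n (M y (f x y) * ω x) -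
        (Fintype.card Z : ℝ)⁻¹ * ∑ x, ∑ y, ∑ z, reTrace n (M y z * ω x)) ^ 2 ≤
      (∑ x, ∑ y, ∑ z, reTrace n (M y z * ω x)) *
        (Fintype.card Y * (1 - (Fintype.card Z : ℝ)⁻¹) * reTrace n ρ) := by
  classical
  have total : ∑ j : Y × Z, reTrace n (M j.1 j.2 * ∑ x, ω x) =
      ∑ x, ∑ y, ∑ z, reTrace n (M y z * ω x) := by
    simp only [Finset.mul_sum, map_sum]
    rw [sum_comm]
    simp only [Fintype.sum_prod_type]
  have hc : 0 ≤ (Fintype.card Y : ℝ) * (1 - (Fintype.card Z : ℝ)⁻¹) :=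
    mul_nonneg (Nat.cast_nonneg _) (sub_nonneg.2 (Nat.cast_inv_le_one _))
  rw [← sum_reTrace_guessBias, ← total]
  exact sq_sum_reTrace_orthogonal_le hω hωρ hρ (fun j ↦ hM j.1 j.2) (fun j ↦ hM1 j.1 j.2) hc
    (guessBias_mul_transpose hf)

end TwoWiseIndependence

section BlockMatrices

open scoped MatrixOrder

variable {X S T : Type*}

/-- The restriction `K (e_x ⊗ ·)` of an operator `K` on `ℂ^X ⊗ ℂ^S` to the classical input `x`. -/
def inputBlock (K : Matrix T (X × S) ℂ) (x : X) : Matrix T S ℂ := K.submatrix id (x, ·)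

/-- The compression of an operator on `ℂ^X ⊗ ℂ^S` to the block of the classical value `x`. -/
def diagBlock (A : Matrix (X × S) (X × S) ℂ) (x : X) : Matrix S S ℂ := A.submatrix (x, ·) (x, ·)

lemma diagBlock_sum {ι : Type*} (s : Finset ι) (A : ι → Matrix (X × S) (X × S) ℂ) (x : X) :
    diagBlock (∑ i ∈ s, A i) x = ∑ i ∈ s, diagBlock (A i) x := by
  ext i j
  simp [diagBlock, Matrix.sum_apply]

lemma diagBlock_one [DecidableEq X] [DecidableEq S] (x : X) :
    diagBlock (1 : Matrix (X × S) (X × S) ℂ) x = 1 :=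
  submatrix_one _ (Prod.mk_right_injective x)

lemma sum_diagBlock_of_sum_eq_one [DecidableEq X] [DecidableEq S] {ι : Type*} [Fintype ι]
    {A : ι → Matrix (X × S) (X × S) ℂ} (hA : ∑ i, A i = 1) (x : X) :
    ∑ i, diagBlock (A i) x = 1 := by
  rw [← diagBlock_sum, hA, diagBlock_one]

lemma diagBlock_mono {A B : Matrix (X × S) (X × S) ℂ} (h : A ≤ B) (x : X) :
     diagBlock A x ≤ diagBlock B x :=
  (show (B - A).PosSemidef from h).submatrix (x, ·)

lemma diagBlock_conjTranspose_mul_self [Fintype T] (K : Matrix T (X × S) ℂ) (x : X) :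
    diagBlock (Kᴴ * K) x = (inputBlock K x)ᴴ * inputBlock K x := rfl

lemma inputBlock_contraction [DecidableEq X] [DecidableEq S] [Fintype T]
    {K : Matrix T (X × S) ℂ} (hK : Kᴴ * K ≤ 1) (x : X) :
    (inputBlock K x)ᴴ * inputBlock K x ≤ 1 := by
  simpa only [diagBlock_conjTranspose_mul_self, diagBlock_one] using diagBlock_mono hK x

lemma trace_mul_of_block [Fintype X] [DecidableEq X] [Fintype S]
    (A : Matrix (X × S) (X × S) ℂ) (B : Matrix S S ℂ) (x : X) :
    (A * of fun q r : X × S ↦ if q.1 = x ∧ r.1 = x then B q.2 r.2 else 0).trace =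
      (diagBlock A x * B).trace := by
  simp [trace, mul_apply, diagBlock, Fintype.sum_prod_type, ite_and, sum_ite_irrel]

end BlockMatrices

section Protocol

open scoped MatrixOrder

variable {X Y Z S_N S_M T_A T_B : Type*} [Fintype S_N]
  {φ : S_N × S_M → ℂ} {K_A : Matrix T_A (X × S_N) ℂ} {K_B : Matrix T_B (Y × S_M) ℂ}

/-- The shared state `φ` as a matrix from Alice's register to Bob's. -/
def amplitudeMatrix (φ : S_N × S_M → ℂ) : Matrix S_M S_N ℂ := of fun m n ↦ φ (n, m)

/-- The unnormalized states of Bob's share of `φ` after Alice, on input `x`, has applied `K_A`: one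
column for each basis vector of Alice's output register. -/
def steeringMatrix (φ : S_N × S_M → ℂ) (K_A : Matrix T_A (X × S_N) ℂ) (x : X) :
    Matrix S_M T_A ℂ :=
  amplitudeMatrix φ * (inputBlock K_A x)ᵀ

/-- The amplitudes of the post-selected state `Ψ = (I ⊗ I ⊗ K_A ⊗ K_B) τ` for uniform inputs; `x`
and `y` index the copies of the inputs on which `K_A` and `K_B` do not act. -/
noncomputable def finalState [Fintype X] [Fintype Y] [Fintype S_M] (φ : S_N × S_M → ℂ)
    (K_A : Matrix T_A (X × S_N) ℂ) (K_B : Matrix T_B (Y × S_M) ℂ)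
    (x : X) (y : Y) (a : T_A) (b : T_B) : ℂ :=
  (Real.sqrt ((Fintype.card X : ℝ) * (Fintype.card Y : ℝ)) : ℂ)⁻¹ *
    ∑ n : S_N, ∑ m : S_M, K_A a (x, n) * K_B b (y, m) * φ (n, m)

lemma finalState_eq_mul_steeringMatrix [Fintype X] [Fintype Y] [Fintype S_M]
    (x : X) (y : Y) (a : T_A) (b : T_B) :
    finalState φ K_A K_B x y a b =
      (Real.sqrt ((Fintype.card X : ℝ) * (Fintype.card Y : ℝ)) : ℂ)⁻¹ *
        (inputBlock K_B y * steeringMatrix φ K_A x) b a := by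
  simp only [finalState, steeringMatrix, amplitudeMatrix, inputBlock, mul_apply, of_apply,
    submatrix_apply, transpose_apply, id, mul_sum]
  rw [sum_comm]
  exact sum_congr rfl fun m _ ↦ sum_congr rfl fun n _ ↦ by ring

variable [Fintype T_A]

/-- The unnormalized state of Bob's share of `φ`, given that Alice does not abort on input `x`. -/
def steeredState (φ : S_N × S_M → ℂ) (K_A : Matrix T_A (X × S_N) ℂ) (x : X) : Matrix S_M S_M ℂ :=
  steeringMatrix φ K_A x * (steeringMatrix φ K_A x)ᴴ

/-- The effect on Bob's share of `φ` of not aborting on input `y` and then guessing `z`. -/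
def guessEffect [Fintype T_B] (K_B : Matrix T_B (Y × S_M) ℂ)
    (G : Z → Matrix (Y × T_B) (Y × T_B) ℂ) (y : Y) (z : Z) : Matrix S_M S_M ℂ :=
  (inputBlock K_B y)ᴴ * diagBlock (G z) y * inputBlock K_B y

lemma reTrace_amplitudeMatrix_mul_conjTranspose [Fintype S_M] (φ : S_N × S_M → ℂ) :
    reTrace S_M (amplitudeMatrix φ * (amplitudeMatrix φ)ᴴ) = ∑ nm, ‖φ nm‖ ^ 2 := by
  rw [reTrace_mul_conjTranspose, Fintype.sum_prod_type_right]
  rfl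

lemma steeredState_nonneg [Finite S_M] (φ : S_N × S_M → ℂ) (K_A : Matrix T_A (X × S_N) ℂ) (x : X) :
    0 ≤ steeredState φ K_A x :=
  nonneg_iff_posSemidef.2 (posSemidef_self_mul_conjTranspose _)

lemma steeredState_le [DecidableEq X] [DecidableEq S_N] [Finite S_M]
    (hK_A : K_Aᴴ * K_A ≤ 1) (φ : S_N × S_M → ℂ) (x : X) :
    steeredState φ K_A x ≤ amplitudeMatrix φ * (amplitudeMatrix φ)ᴴ := by
  have hblock : (1 - (inputBlock K_A x)ᴴ * inputBlock K_A x).PosSemidef :=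
    inputBlock_contraction hK_A x
  have h := hblock.transpose.mul_mul_conjTranspose_same (amplitudeMatrix φ)
  simpa only [le_iff, steeredState, steeringMatrix, transpose_sub, transpose_one, transpose_mul,
    conjTranspose_mul, conjTranspose_transpose_eq_transpose_conjTranspose, Matrix.mul_sub,
    Matrix.sub_mul, Matrix.mul_one, Matrix.mul_assoc] using h

section Effects

variable [Fintype T_B] {G : Z → Matrix (Y × T_B) (Y × T_B) ℂ}

lemma guessEffect_nonneg [Finite S_M] (hG : ∀ z, 0 ≤ G z) (y : Y) (z : Z) :
    0 ≤ guessEffect K_B G y z :=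
  nonneg_iff_posSemidef.2
    (((nonneg_iff_posSemidef.1 (hG z)).submatrix _).conjTranspose_mul_mul_same _)

lemma guessEffect_le_one [DecidableEq Y] [Finite S_M] [DecidableEq S_M] [DecidableEq T_B]
    [Fintype Z] (hK_B : K_Bᴴ * K_B ≤ 1) (hG : ∀ z, 0 ≤ G z) (hGsum : ∑ z, G z = 1)
    (y : Y) (z : Z) : guessEffect K_B G y z ≤ 1 :=
  calc guessEffect K_B G y z
      ≤ ∑ z, guessEffect K_B G y z :=
        single_le_sum (fun z _ ↦ guessEffect_nonneg hG y z) (mem_univ z)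
    _ = (inputBlock K_B y)ᴴ * inputBlock K_B y := by
        simp only [guessEffect, ← Matrix.sum_mul, ← Matrix.mul_sum,
          sum_diagBlock_of_sum_eq_one hGsum, Matrix.mul_one]
    _ ≤ 1 := inputBlock_contraction hK_B y

end Effects

section Probabilities

variable [Fintype X] [Fintype Y] [Fintype S_M]

/-- The unnormalized `(x, y)`-block of the state that `Ψ` leaves on Bob's output register. -/
def reducedState (Ψ : X → Y → T_A → T_B → ℂ) (x : X) (y : Y) : Matrix T_B T_B ℂ :=
  of fun t t' ↦ ∑ a, Ψ x y a t * (starRingEnd ℂ) (Ψ x y a t')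

/-- The probability `‖Ψ‖²` that neither party aborts. -/
noncomputable def nonAbortProb [Fintype T_B] (Ψ : X → Y → T_A → T_B → ℂ) : ℝ :=
  ∑ x, ∑ y, ∑ a, ∑ b, ‖Ψ x y a b‖ ^ 2

/-- The block `W^{x,y}` of the state conditioned on non-abort. -/
noncomputable def conditionalState [Fintype T_B] (Ψ : X → Y → T_A → T_B → ℂ) (x : X) (y : Y) :
    Matrix T_B T_B ℂ :=
  (nonAbortProb Ψ : ℂ)⁻¹ • reducedState Ψ x y

/-- The probability, conditioned on non-abort, that Bob's measurement `G` returns `f x y`. -/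
noncomputable def successProb [Fintype T_B] [DecidableEq Y] (f : X → Y → Z)
    (Ψ : X → Y → T_A → T_B → ℂ) (G : Z → Matrix (Y × T_B) (Y × T_B) ℂ) : ℝ :=
  ∑ x, ∑ y, ((G (f x y) * of fun q r : Y × T_B ↦
    if q.1 = y ∧ r.1 = y then conditionalState Ψ x y q.2 r.2 else 0).trace).re

variable {Ψ : X → Y → T_A → T_B → ℂ} {G : Z → Matrix (Y × T_B) (Y × T_B) ℂ}

lemma reducedState_finalState (x : X) (y : Y) :
    reducedState (finalState φ K_A K_B) x y =
      ((Fintype.card X : ℝ) * Fintype.card Y)⁻¹ •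
        (inputBlock K_B y * steeredState φ K_A x * (inputBlock K_B y)ᴴ) := by
  set V := inputBlock K_B y * steeringMatrix φ K_A x with hV
  have factor : inputBlock K_B y * steeredState φ K_A x * (inputBlock K_B y)ᴴ = V * Vᴴ := by
    simp only [hV, steeredState, conjTranspose_mul, Matrix.mul_assoc]
  set s : ℂ := (Real.sqrt ((Fintype.card X : ℝ) * Fintype.card Y) : ℂ)⁻¹ with hs
  have hs_conj : (starRingEnd ℂ) s = s := by
    rw [hs, map_inv₀, Complex.conj_ofReal]
  have hs_sq : s * s = (((Fintype.card X : ℝ) * Fintype.card Y)⁻¹ : ℝ) := by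
    rw [hs, ← mul_inv, ← Complex.ofReal_mul, Real.mul_self_sqrt (by positivity),
      Complex.ofReal_inv]
  rw [factor]
  ext t t'
  rw [Matrix.smul_apply, mul_apply, Complex.real_smul, ← hs_sq, mul_sum]
  refine sum_congr rfl fun a _ ↦ ?_
  rw [finalState_eq_mul_steeringMatrix, finalState_eq_mul_steeringMatrix, map_mul, hs_conj,
    mul_mul_mul_comm, conjTranspose_apply, Complex.star_def]

variable [Fintype T_B]

lemma reTrace_diagBlock_mul_reducedState (x : X) (y : Y) (z : Z) :
    reTrace T_B (diagBlock (G z) y * reducedState (finalState φ K_A K_B) x y) =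
      ((Fintype.card X : ℝ) * Fintype.card Y)⁻¹ *
        reTrace S_M (guessEffect K_B G y z * steeredState φ K_A x) := by
  rw [reducedState_finalState, Matrix.mul_smul, map_smul, smul_eq_mul, guessEffect,
    ← Matrix.mul_assoc, reTrace_mul_comm]
  simp only [Matrix.mul_assoc]

variable [DecidableEq Y]

lemma nonAbortProb_eq_sum_reTrace [Fintype Z] [DecidableEq T_B] (hGsum : ∑ z, G z = 1) :
    nonAbortProb Ψ = ∑ x, ∑ y, ∑ z, reTrace T_B (diagBlock (G z) y * reducedState Ψ x y) := by
  refine sum_congr rfl fun x _ ↦ sum_congr rfl fun y _ ↦ ?_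
  rw [← map_sum, ← Matrix.sum_mul, sum_diagBlock_of_sum_eq_one hGsum, Matrix.one_mul, sum_comm]
  exact (reTrace_mul_conjTranspose (of fun b a ↦ Ψ x y a b)).symm

lemma nonAbortProb_mul_successProb (f : X → Y → Z) (hΨ : nonAbortProb Ψ ≠ 0) :
    nonAbortProb Ψ * successProb f Ψ G =
      ∑ x, ∑ y, reTrace T_B (diagBlock (G (f x y)) y * reducedState Ψ x y) := by
  have conditional (x : X) (y : Y) :
      conditionalState Ψ x y = (nonAbortProb Ψ)⁻¹ • reducedState Ψ x y := by
    rw [conditionalState, ← Complex.ofReal_inv, Complex.coe_smul]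
  simp only [successProb, trace_mul_of_block, ← reTrace_apply, conditional, Matrix.mul_smul,
    map_smul, smul_eq_mul, ← mul_sum, mul_inv_cancel_left₀ hΨ]

end Probabilities

section EfficiencyBound

variable [Fintype X] [DecidableEq X] [Fintype Y] [DecidableEq Y] [Fintype Z] [DecidableEq Z]
  [Nonempty Z] [DecidableEq S_N] [Fintype S_M] [DecidableEq S_M] [Fintype T_B] [DecidableEq T_B]
  {f : X → Y → Z} {G : Z → Matrix (Y × T_B) (Y × T_B) ℂ}

theorem card_mul_nonAbortProb_mul_sq_le (hf : IsTwoWiseIndependent f)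
    (hφ : ∑ nm, ‖φ nm‖ ^ 2 = 1) (hK_A : K_Aᴴ * K_A ≤ 1) (hK_B : K_Bᴴ * K_B ≤ 1)
    (hp : 0 < nonAbortProb (finalState φ K_A K_B)) (hG : ∀ z, 0 ≤ G z) (hGsum : ∑ z, G z = 1) :
    Fintype.card X * nonAbortProb (finalState φ K_A K_B) *
        (successProb f (finalState φ K_A K_B) G - (Fintype.card Z : ℝ)⁻¹) ^ 2 ≤
      1 - (Fintype.card Z : ℝ)⁻¹ := by
  set N : ℝ := (Fintype.card X : ℝ) * Fintype.card Y with hN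
  set p := nonAbortProb (finalState φ K_A K_B) with hp_def
  set P := successProb f (finalState φ K_A K_B) G
  set k := (Fintype.card Z : ℝ)
  have total : p = N⁻¹ * ∑ x, ∑ y, ∑ z,
      reTrace S_M (guessEffect K_B G y z * steeredState φ K_A x) := by
    simp only [hp_def, nonAbortProb_eq_sum_reTrace hGsum, reTrace_diagBlock_mul_reducedState,
      mul_sum, hN]
  have guessed : p * P = N⁻¹ * ∑ x, ∑ y,
      reTrace S_M (guessEffect K_B G y (f x y) * steeredState φ K_A x) := by
    rw [nonAbortProb_mul_successProb f hp.ne']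
    simp only [reTrace_diagBlock_mul_reducedState, mul_sum, hN]
  have hN0 : N ≠ 0 := by
    intro h
    simp [total, h] at hp
  have advantage := sq_guessing_advantage_le hf (steeredState_nonneg φ K_A)
    (steeredState_le hK_A φ) (nonneg_iff_posSemidef.2 (posSemidef_self_mul_conjTranspose _))
    (guessEffect_nonneg hG) (guessEffect_le_one hK_B hG hGsum)
  rw [← (eq_inv_mul_iff_mul_eq₀ hN0).1 total, ← (eq_inv_mul_iff_mul_eq₀ hN0).1 guessed,
    reTrace_amplitudeMatrix_mul_conjTranspose, hφ, mul_one] at advantage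
  have hscale : 0 < N * p * Fintype.card Y := by
    have hY : (Fintype.card Y : ℝ) ≠ 0 := right_ne_zero_of_mul hN0
    positivity
  refine le_of_mul_le_mul_left ?_ hscale
  calc N * p * Fintype.card Y * (Fintype.card X * p * (P - k⁻¹) ^ 2)
      = (N * (p * P) - k⁻¹ * (N * p)) ^ 2 := by rw [hN]; ring
    _ ≤ N * p * (Fintype.card Y * (1 - k⁻¹)) := advantage
    _ = N * p * Fintype.card Y * (1 - k⁻¹) := (mul_assoc _ _ _).symm

theorem efficiency_lower_bound_two_wise_independent_general (hf : IsTwoWiseIndependent f)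
    (hφ : ∑ nm, ‖φ nm‖ ^ 2 = 1) (hK_A : K_Aᴴ * K_A ≤ 1) (hK_B : K_Bᴴ * K_B ≤ 1)
    (hp : 0 < nonAbortProb (finalState φ K_A K_B)) (hG : ∀ z, 0 ≤ G z) (hGsum : ∑ z, G z = 1)
    {γ : ℝ} (hPγ : 1 - γ ≤ successProb f (finalState φ K_A K_B) G)
    (hγ : γ < 1 - (Fintype.card Z : ℝ)⁻¹) :
    nonAbortProb (finalState φ K_A K_B) ≤
      (1 - (Fintype.card Z : ℝ)⁻¹) / Fintype.card X *
        (1 - γ - (Fintype.card Z : ℝ)⁻¹)⁻¹ ^ 2 := by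
  have hX : (0 : ℝ) < Fintype.card X := by
    refine Nat.cast_pos.2 (Fintype.card_pos_iff.2 (not_isEmpty_iff.1 fun _ ↦ ?_))
    simp [nonAbortProb] at hp
  have hq : 0 < 1 - γ - (Fintype.card Z : ℝ)⁻¹ := by linarith
  rw [inv_pow, ← div_eq_mul_inv, div_div, le_div_iff₀ (by positivity)]
  calc nonAbortProb (finalState φ K_A K_B) *
        (Fintype.card X * (1 - γ - (Fintype.card Z : ℝ)⁻¹) ^ 2)
      = Fintype.card X * nonAbortProb (finalState φ K_A K_B) *
          (1 - γ - (Fintype.card Z : ℝ)⁻¹) ^ 2 := by ring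
    _ ≤ Fintype.card X * nonAbortProb (finalState φ K_A K_B) *
          (successProb f (finalState φ K_A K_B) G - (Fintype.card Z : ℝ)⁻¹) ^ 2 := by gcongr
    _ ≤ 1 - (Fintype.card Z : ℝ)⁻¹ := card_mul_nonAbortProb_mul_sq_le hf hφ hK_A hK_B hp hG hGsum

end EfficiencyBound

end Protocol

/-- Efficiency lower bound for two-wise independent functions: in any zero-communication
entanglement-assisted protocol with abort for a two-wise independent `f : 𝒳 × 𝒴 → 𝒵` with
`|𝒳| = |𝒴|` and uniform inputs, if Bob's POVM guess conditioned on non-abort is correct with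
probability at least `1 − γ` where `γ < 1 − 1/|𝒵|`, then the non-abort probability `p`
satisfies `p ≤ (|𝒵|/|𝒳|)·(1 − γ − 1/|𝒵|)⁻²`. -/
theorem efficiency_lower_bound_two_wise_independent
    {𝒳 𝒴 𝒵 S_N S_M T_A T_B : Type*}
    [Fintype 𝒳] [DecidableEq 𝒳] [Nonempty 𝒳]
    [Fintype 𝒴] [DecidableEq 𝒴] [Nonempty 𝒴]
    [Fintype 𝒵] [DecidableEq 𝒵] [Nonempty 𝒵]
    [Fintype S_N] [DecidableEq S_N] [Fintype S_M] [DecidableEq S_M]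
    [Fintype T_A] [Fintype T_B] [DecidableEq T_B]
    -- |𝒳| = |𝒴|
    (hcard : Fintype.card 𝒳 = Fintype.card 𝒴)
    (f : 𝒳 → 𝒴 → 𝒵)
    -- `f` is two-wise independent
    (hf : ∀ x₁ x₂ : 𝒳, x₁ ≠ x₂ →
      (univ.filter fun y => f x₁ y = f x₂ y).card * Fintype.card 𝒵 = Fintype.card 𝒴)
    -- shared entanglement: a unit vector
    (φ : S_N × S_M → ℂ) (hφ : ∑ nm, ‖φ nm‖ ^ 2 = 1)
    -- the two local measurement (post-selection) operators, contractions
    (K_A : Matrix T_A (𝒳 × S_N) ℂ) (hK_A : Loewner (K_Aᴴ * K_A) 1)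
    (K_B : Matrix T_B (𝒴 × S_M) ℂ) (hK_B : Loewner (K_Bᴴ * K_B) 1)
    -- `Ψ = (I ⊗ I ⊗ K_A ⊗ K_B) τ` where
    -- `τ = (1/√(|𝒳||𝒴|)) ∑_{x,y} e_x ⊗ e_x ⊗ e_y ⊗ e_y ⊗ φ`
    (Ψ : 𝒳 → 𝒴 → T_A → T_B → ℂ)
    (hΨ : Ψ = fun x y a b =>
      (Real.sqrt ((Fintype.card 𝒳 : ℝ) * (Fintype.card 𝒴 : ℝ)) : ℂ)⁻¹ *
        ∑ n : S_N, ∑ m : S_M, K_A a (x, n) * K_B b (y, m) * φ (n, m))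
    -- the non-abort probability
    (p : ℝ) (hp : p = ∑ x, ∑ y, ∑ a, ∑ b, ‖Ψ x y a b‖ ^ 2) (hppos : 0 < p)
    -- the blocks `W^{x,y}` of the post-selected state on registers `X, Y₁, T_B`
    (W : 𝒳 → 𝒴 → Matrix T_B T_B ℂ)
    (hW : W = fun x y => fun t t' =>
      (p : ℂ)⁻¹ * ∑ a, Ψ x y a t * (starRingEnd ℂ) (Ψ x y a t'))
    -- Bob's guessing POVM on registers `Y, T_B`
    (G : 𝒵 → Matrix (𝒴 × T_B) (𝒴 × T_B) ℂ)
    (hGpsd : ∀ z, (G z).PosSemidef)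
    (hGsum : ∑ z, G z = 1)
    -- success probability of the guess, conditioned on non-abort
    (γ P : ℝ)
    (hP : P = ∑ x, ∑ y,
      ((G (f x y) *
        Matrix.of (fun q r : 𝒴 × T_B =>
          if q.1 = y ∧ r.1 = y then W x y q.2 r.2 else 0)).trace).re)
    (hPγ : 1 - γ ≤ P)
    (hγ : γ < 1 - (Fintype.card 𝒵 : ℝ)⁻¹) :
    p ≤ ((Fintype.card 𝒵 : ℝ) / (Fintype.card 𝒳 : ℝ)) *
      (1 - γ - (Fintype.card 𝒵 : ℝ)⁻¹)⁻¹ ^ 2 := by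
  subst hΨ hp hW hP
  refine (efficiency_lower_bound_two_wise_independent_general (φ := φ) hf hφ hK_A hK_B hppos
    (fun z ↦ (hGpsd z).nonneg) hGsum hPγ hγ).trans ?_
  gcongr
  exact (sub_le_self 1 (by positivity)).trans (Nat.one_le_cast.2 Fintype.card_pos)
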